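/- For every t > 0, the sequence n ↦ |tC_n^geo|_Rips is unbounded above; equivalently, its upper limit satisfies limsup_{n→∞} |tC_n^geo|_Rips = +∞. -/

import Mathlib

open scoped BigOperators Real

/-- The Rips magnitude function of a finite subset `A` of a metric space:
`|tA|_Rips = Σ_{∅ ≠ B ⊆ A} (−1)^{#B−1} e^{−diam(B)·t}`. -/
noncomputable def ripsMag {Y : Type*} [MetricSpace Y] (A : Finset Y) (t : ℝ) : ℝ :=
  ∑ B ∈ A.powerset.filter (fun B => B.Nonempty),
    (-1 : ℝ) ^ (B.card - 1) * Real.exp (-(Metric.diam (B : Set Y)) * t)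


open scoped Classical in
/-- The geodesic cycle `C_n^geo`: `n` equally spaced points on the circle
`ℝ/2πℤ` of total arclength `2π`, with the geodesic metric
`d(i,j) = (2π/n)·min(|i−j|, n−|i−j|)`. -/
noncomputable def geoCycle (n : ℕ) : Finset (AddCircle (2 * π : ℝ)) :=
  (Finset.range n).image (fun k => ((2 * π * k / n : ℝ) : AddCircle (2 * π : ℝ)))

/-!
Abel summation writes the Rips magnitude as a combination, with the positive weights
`e^{-st} - e^{-s't}` at consecutive scales `s < s'`, of the Euler characteristics of the Rips
complexes. At the scale of `r` steps around the cycle with `n = 2r + m` points, `m > 0`, call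
`a ∈ A` initial in the simplex `A` if `a - r ∉ A`. If `P` is nonempty and `a ∈ P`, `a + 1 ∉ P`, then
toggling `a + 1` cancels in pairs the simplices in which all points of `P` are initial. By
inclusion-exclusion over `P`, only the simplices without initial points count. The nonempty ones
are the cosets of the subgroup of order `n / m`, and they exist only if `m ∣ r`; their number is `m`
and their size `n / m` is odd. Each weight is at least of order `1 / n`, so an odd divisor
`d = n / m` of `n` contributes at least a multiple of `1 / d`. With `n = K!` these contributions
grow like the sum of the reciprocals of the odd numbers up to `K`.
-/

lemma sum_nonempty_neg_one_pow_card_add_one {α : Type*} {A : Finset α} (hA : A.Nonempty) :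
    ∑ B ∈ A.powerset with B.Nonempty, (-1 : ℤ) ^ (B.card + 1) = 1 := by
  classical
  have hfilter : A.powerset.filter Finset.Nonempty = A.powerset.erase ∅ := by
    simp only [Finset.nonempty_iff_ne_empty, Finset.filter_ne']
  have h := Finset.add_sum_erase A.powerset (fun B => (-1 : ℤ) ^ B.card)
    (Finset.empty_mem_powerset A)
  rw [Finset.sum_powerset_neg_one_pow_card_of_nonempty hA, Finset.card_empty, pow_zero] at h
  simp only [hfilter, pow_succ, ← Finset.sum_mul]
  linarith

lemma neg_one_pow_card_symmDiff_singleton {α : Type*} [DecidableEq α] (A : Finset α) (x : α) :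
    (-1 : ℤ) ^ (symmDiff A {x}).card = -(-1) ^ A.card := by
  by_cases hx : x ∈ A
  · have hA : symmDiff A {x} = A.erase x := by
      ext b; simp only [Finset.mem_symmDiff, Finset.mem_singleton, Finset.mem_erase]; grind
    rw [hA, ← Finset.card_erase_add_one hx, pow_succ]
    ring
  · have hA : symmDiff A {x} = insert x A := by
      ext b; simp only [Finset.mem_symmDiff, Finset.mem_singleton, Finset.mem_insert]; grind
    rw [hA, Finset.card_insert_of_notMem hx, pow_succ]
    ring

lemma sum_range_ite_le_sub_add {G : Type*} [AddCommGroup G] (f : ℕ → G) {k N : ℕ} (h : k ≤ N) :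
    (∑ r ∈ Finset.range N, if k ≤ r then f r - f (r + 1) else 0) + f N = f k := by
  induction N, h using Nat.le_induction with
  | base =>
    rw [Finset.sum_eq_zero fun r hr => if_neg (by simpa using hr), zero_add]
  | succ N hN ih =>
    rw [Finset.sum_range_succ, if_pos hN, add_assoc, sub_add_cancel, ih]

lemma sub_mul_exp_neg_le (x y : ℝ) :
    (y - x) * Real.exp (-y) ≤ Real.exp (-x) - Real.exp (-y) := by
  have h := mul_le_mul_of_nonneg_right (Real.add_one_le_exp (y - x)) (Real.exp_pos (-y)).le
  rw [← Real.exp_add, show y - x + -y = -x by ring] at h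
  linarith

lemma exists_diam_eq_dist {Y : Type*} [PseudoMetricSpace Y] {B : Finset Y}
    (hB : B.Nonempty) :
    ∃ x ∈ B, ∃ y ∈ B, Metric.diam (B : Set Y) = dist x y := by
  obtain ⟨⟨x, y⟩, hxy, hmax⟩ :=
    (B ×ˢ B).exists_max_image (fun p => dist p.1 p.2) (hB.product hB)
  rw [Finset.mem_product] at hxy
  refine ⟨x, hxy.1, y, hxy.2, le_antisymm ?_ ?_⟩
  · exact Metric.diam_le_of_forall_dist_le dist_nonneg fun a ha b hb =>
      hmax (a, b) (Finset.mk_mem_product ha hb)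
  · exact Metric.dist_le_diam_of_mem B.finite_toSet.isBounded hxy.1 hxy.2

section MetricSpace

variable {Y : Type*} [MetricSpace Y]

/-- The Euler characteristic of the Vietoris–Rips complex of `A` at scale `s`, whose simplices are
the nonempty subsets of diameter at most `s`. -/
noncomputable def ripsEuler (A : Finset Y) (s : ℝ) : ℤ :=
  ∑ B ∈ A.powerset.filter (fun B : Finset Y => B.Nonempty ∧ Metric.diam (B : Set Y) ≤ s),
    (-1 : ℤ) ^ (B.card + 1)

lemma ripsMag_eq_sum_nonempty (A : Finset Y) (t : ℝ) :
    ripsMag A t = ∑ B ∈ A.powerset with B.Nonempty,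
      (-1 : ℝ) ^ (B.card + 1) * Real.exp (-Metric.diam (B : Set Y) * t) := by
  refine Finset.sum_congr rfl fun B hB => ?_
  obtain ⟨k, hk⟩ := Nat.exists_eq_succ_of_ne_zero (Finset.mem_filter.1 hB).2.card_ne_zero
  rw [hk, Nat.succ_sub_one, Nat.succ_eq_add_one, pow_add, pow_add]
  norm_num

theorem ripsMag_eq_sum_ripsEuler {A : Finset Y} (hA : A.Nonempty) {s : ℕ → ℝ}
    (hs : StrictMono s) {N : ℕ}
    (hdiam : ∀ B ⊆ A, B.Nonempty → ∃ k ≤ N, Metric.diam (B : Set Y) = s k) (t : ℝ) :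
    ripsMag A t =
      (∑ r ∈ Finset.range N,
        ripsEuler A (s r) * (Real.exp (-s r * t) - Real.exp (-s (r + 1) * t))) +
      Real.exp (-s N * t) := by
  set f : ℕ → ℝ := fun r => Real.exp (-s r * t)
  have hexp : ∀ B ∈ A.powerset.filter Finset.Nonempty,
      Real.exp (-Metric.diam (B : Set Y) * t) =
        (∑ r ∈ Finset.range N, if Metric.diam (B : Set Y) ≤ s r then f r - f (r + 1) else 0) +
          f N := by
    intro B hB
    rw [Finset.mem_filter, Finset.mem_powerset] at hB
    obtain ⟨k, hk, hBk⟩ := hdiam B hB.1 hB.2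
    simp only [hBk, hs.le_iff_le]
    exact (sum_range_ite_le_sub_add f hk).symm
  have htotal : ∑ B ∈ A.powerset with B.Nonempty, (-1 : ℝ) ^ (B.card + 1) = 1 := by
    exact_mod_cast sum_nonempty_neg_one_pow_card_add_one hA
  rw [ripsMag_eq_sum_nonempty, Finset.sum_congr rfl fun B hB => by rw [hexp B hB]]
  simp only [mul_add, Finset.sum_add_distrib, ← Finset.sum_mul, htotal, one_mul, Finset.mul_sum]
  rw [Finset.sum_comm]
  congr 1
  refine Finset.sum_congr rfl fun r _ => ?_
  rw [ripsEuler, ← Finset.filter_filter,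
    Finset.sum_filter (fun B : Finset Y => Metric.diam (B : Set Y) ≤ s r)]
  push_cast
  rw [Finset.sum_mul]
  refine Finset.sum_congr rfl fun B _ => ?_
  split_ifs <;> simp only [mul_zero, zero_mul, f]

end MetricSpace

section Cycle

variable {n r m : ℕ}

/-- Simplices of the Vietoris–Rips complex of the `n`-cycle at scale `r`, with the cycle encoded as
`ZMod n` and the empty set counted as a simplex. The graph distance from `a` to `b` is the absolute
value of the representative of `b - a` of least absolute value. -/
def IsCycleSimplex (r : ℕ) (A : Finset (ZMod n)) : Prop :=
  ∀ a ∈ A, ∀ b ∈ A, (b - a).valMinAbs.natAbs ≤ r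

instance : DecidablePred (IsCycleSimplex (n := n) r) :=
  fun A => inferInstanceAs (Decidable (∀ a ∈ A, ∀ b ∈ A, (b - a).valMinAbs.natAbs ≤ r))

/-- The points of `A` that start an arithmetic progression of step `r` in `A`; they are the
obstruction to `A` being closed under translation by `-r`. -/
def initialPoints (r : ℕ) (A : Finset (ZMod n)) : Finset (ZMod n) :=
  {a ∈ A | a - r ∉ A}

lemma mem_initialPoints {A : Finset (ZMod n)} {a : ZMod n} :
    a ∈ initialPoints r A ↔ a ∈ A ∧ a - r ∉ A :=
  Finset.mem_filter

lemma sub_mem_of_initialPoints_eq_empty {A : Finset (ZMod n)} (h : initialPoints r A = ∅)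
    {a : ZMod n} (ha : a ∈ A) : a - r ∈ A := by
  by_contra har
  exact Finset.notMem_empty a (h ▸ mem_initialPoints.2 ⟨ha, har⟩)

lemma IsCycleSimplex.mono {A B : Finset (ZMod n)} (hB : IsCycleSimplex r B) (h : A ⊆ B) :
    IsCycleSimplex r A :=
  fun a ha b hb => hB a (h ha) b (h hb)

lemma IsCycleSimplex.insert {A : Finset (ZMod n)} {x : ZMod n} (hA : IsCycleSimplex r A)
    (hx : ∀ b ∈ A, (b - x).valMinAbs.natAbs ≤ r) : IsCycleSimplex r (insert x A) := by
  intro a ha b hb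
  rw [Finset.mem_insert] at ha hb
  rcases ha with rfl | ha <;> rcases hb with rfl | hb
  · simp
  · exact hx b hb
  · rw [← ZMod.natAbs_valMinAbs_neg, neg_sub]
    exact hx a ha
  · exact hA a ha b hb

lemma subset_initialPoints_symmDiff {A P : Finset (ZMod n)} {x : ZMod n}
    (hPA : P ⊆ initialPoints r A) (hxP : x ∉ P) (hxA : x + r ∉ A) :
    P ⊆ initialPoints r (symmDiff A {x}) := by
  intro p hp
  have hpA := mem_initialPoints.1 (hPA hp)
  have hpx : p ≠ x := fun h => hxP (h ▸ hp)
  have hprx : p - r ≠ x := fun h => hxA (by rw [← h, sub_add_cancel]; exact hpA.1)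
  simp only [mem_initialPoints, Finset.mem_symmDiff, Finset.mem_singleton]
  tauto

lemma add_mul_mem_of_initialPoints_eq_empty (hn : 2 * r + m = n) {A : Finset (ZMod n)}
    (hcl : initialPoints r A = ∅) {a : ZMod n} (ha : a ∈ A) (k : ℕ) : a + k * m ∈ A := by
  have hm : (2 * r + m : ZMod n) = 0 := by
    exact_mod_cast (congrArg _ hn).trans (ZMod.natCast_self n)
  induction k with
  | zero => simpa using ha
  | succ k ih =>
    have h := sub_mem_of_initialPoints_eq_empty hcl (sub_mem_of_initialPoints_eq_empty hcl ih)
    convert h using 1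
    push_cast
    linear_combination hm

variable [NeZero n]

lemma natAbs_valMinAbs_natCast_le_iff {k : ℕ} (hk : k ≤ n) :
    (k : ZMod n).valMinAbs.natAbs ≤ r ↔ k ≤ r ∨ n ≤ k + r := by
  rw [ZMod.valMinAbs_natAbs_eq_min]
  rcases hk.eq_or_lt with rfl | hk
  · simp
  · rw [ZMod.val_cast_of_lt hk]
    omega

lemma eq_neg_of_lt_natAbs_valMinAbs_sub_one {y : ZMod n} (hy : y.valMinAbs.natAbs ≤ r)
    (hy' : r < (y - 1).valMinAbs.natAbs) : y = -(r : ZMod n) := by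
  obtain ⟨v, hv, hyv⟩ : ∃ v < n, y - 1 = (v : ZMod n) :=
    ⟨(y - 1).val, ZMod.val_lt _, (ZMod.natCast_zmod_val _).symm⟩
  have hy_eq : y = ((v + 1 : ℕ) : ZMod n) := by
    push_cast
    rw [← hyv, sub_add_cancel]
  rw [hyv, ← not_le, natAbs_valMinAbs_natCast_le_iff hv.le] at hy'
  rw [hy_eq, natAbs_valMinAbs_natCast_le_iff hv] at hy
  have hn : v + 1 + r = n := by omega
  rw [hy_eq, eq_neg_iff_add_eq_zero, ← Nat.cast_add, hn, ZMod.natCast_self]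

lemma IsCycleSimplex.insert_add_one {A : Finset (ZMod n)} (hA : IsCycleSimplex r A) {a : ZMod n}
    (ha : a ∈ initialPoints r A) : IsCycleSimplex r (Insert.insert (a + 1) A) := by
  rw [mem_initialPoints] at ha
  refine hA.insert fun b hb => ?_
  by_contra! hlt
  rw [← sub_sub] at hlt
  have hba := eq_neg_of_lt_natAbs_valMinAbs_sub_one (hA a ha.1 b hb) hlt
  exact ha.2 (by rwa [sub_eq_add_neg, ← hba, add_sub_cancel])

lemma IsCycleSimplex.add_one_add_notMem (hr : 2 * r < n) {A : Finset (ZMod n)}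
    (hA : IsCycleSimplex r A) {a : ZMod n} (ha : a ∈ initialPoints r A) : a + 1 + r ∉ A := by
  rw [mem_initialPoints] at ha
  intro hmem
  have hle := hA a ha.1 _ hmem
  rw [show a + 1 + r - a = ((r + 1 : ℕ) : ZMod n) by push_cast; ring,
    natAbs_valMinAbs_natCast_le_iff (by omega)] at hle
  have hn : ((r + 1 + r : ℕ) : ZMod n) = 0 := by
    rw [show r + 1 + r = n by omega, ZMod.natCast_self]
  push_cast at hn
  exact ha.2 (by rwa [show a - (r : ZMod n) = a + 1 + r by linear_combination -hn])

lemma exists_mem_add_one_notMem {P : Finset (ZMod n)} (hP : P.Nonempty)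
    (hP' : P ≠ Finset.univ) : ∃ a ∈ P, a + 1 ∉ P := by
  by_contra! hstep
  obtain ⟨p, hp⟩ := hP
  have hadd : ∀ k : ℕ, p + k ∈ P := by
    intro k
    induction k with
    | zero => simpa using hp
    | succ k ih => simpa [add_assoc] using hstep _ ih
  refine hP' (Finset.eq_univ_of_forall fun b => ?_)
  simpa using hadd (b - p).val

lemma sum_subset_initialPoints_eq_zero (hr : 2 * r < n) {P : Finset (ZMod n)}
    (hP : P.Nonempty) :
    ∑ A : Finset (ZMod n) with IsCycleSimplex r A ∧ P ⊆ initialPoints r A,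
      (-1 : ℤ) ^ (A.card + 1) = 0 := by
  rcases eq_or_ne P Finset.univ with rfl | hP'
  · refine Finset.sum_eq_zero fun A hA => ?_
    have hmem : ∀ a, a ∈ A ∧ a - r ∉ A := fun a =>
      mem_initialPoints.1 ((Finset.mem_filter.1 hA).2.2 (Finset.mem_univ a))
    exact absurd (hmem _).1 (hmem 0).2
  obtain ⟨a, haP, hxP⟩ := exists_mem_add_one_notMem hP hP'
  refine Finset.sum_involution (fun A _ => symmDiff A {a + 1}) ?_ ?_ ?_ ?_
  · intro A _
    rw [pow_succ, pow_succ, neg_one_pow_card_symmDiff_singleton]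
    ring
  · intro A _ _
    simp [symmDiff_eq_left]
  · intro A hA
    rw [Finset.mem_filter_univ] at hA ⊢
    have ha := hA.2 haP
    have hsub : symmDiff A {a + 1} ⊆ insert (a + 1) A := by
      intro b
      simp only [Finset.mem_symmDiff, Finset.mem_singleton, Finset.mem_insert]
      tauto
    exact ⟨(hA.1.insert_add_one ha).mono hsub,
      subset_initialPoints_symmDiff hA.2 hxP (hA.1.add_one_add_notMem hr ha)⟩
  · intro A _
    exact symmDiff_symmDiff_cancel_right _ _

lemma sum_initialPoints_nonempty_eq_zero (hr : 2 * r < n) :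
    ∑ A : Finset (ZMod n) with IsCycleSimplex r A ∧ (initialPoints r A).Nonempty,
      (-1 : ℤ) ^ (A.card + 1) = 0 := by
  let S : ZMod n → Finset (Finset (ZMod n)) := fun p =>
    {A | IsCycleSimplex r A ∧ p ∈ initialPoints r A}
  have hunion : ({A | IsCycleSimplex r A ∧ (initialPoints r A).Nonempty} :
      Finset (Finset (ZMod n))) = Finset.univ.biUnion S := by
    ext A
    rw [Finset.mem_filter_univ]
    simp only [S, Finset.mem_biUnion, Finset.mem_univ, true_and, Finset.mem_filter,
      exists_and_left, Finset.Nonempty]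
  rw [hunion, Finset.inclusion_exclusion_sum_biUnion]
  refine Finset.sum_eq_zero fun ⟨P, hP⟩ _ => ?_
  have hPne : P.Nonempty := (Finset.mem_filter.1 hP).2
  have hinter : P.inf' hPne S =
      ({A | IsCycleSimplex r A ∧ P ⊆ initialPoints r A} : Finset (Finset (ZMod n))) := by
    ext A
    rw [Finset.mem_inf', Finset.mem_filter_univ]
    simp only [S, Finset.mem_filter_univ]
    obtain ⟨p, hp⟩ := hPne
    exact ⟨fun h => ⟨(h p hp).1, fun q hq => (h q hq).2⟩, fun h q hq => ⟨h.1, h.2 hq⟩⟩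
  rw [hinter, sum_subset_initialPoints_eq_zero hr hPne, smul_zero]

lemma sum_isCycleSimplex_eq_sum_initialPoints_eq_empty (hr : 2 * r < n) :
    ∑ A : Finset (ZMod n) with A.Nonempty ∧ IsCycleSimplex r A, (-1 : ℤ) ^ (A.card + 1) =
      ∑ A : Finset (ZMod n) with A.Nonempty ∧ IsCycleSimplex r A ∧ initialPoints r A = ∅,
        (-1 : ℤ) ^ (A.card + 1) := by
  rw [← Finset.sum_filter_add_sum_filter_not _ (fun A => initialPoints r A = ∅),
    Finset.filter_filter, Finset.filter_filter]
  simp only [and_assoc]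
  rw [add_eq_left, ← sum_initialPoints_nonempty_eq_zero hr]
  refine Finset.sum_congr (Finset.filter_congr fun A _ => ?_) fun _ _ => rfl
  rw [← ne_eq, ← Finset.nonempty_iff_ne_empty]
  exact ⟨And.right, fun h => ⟨h.2.mono (Finset.filter_subset _ _), h⟩⟩

lemma IsCycleSimplex.dvd_val_sub (hm : 0 < m) (hn : 2 * r + m = n) {A : Finset (ZMod n)}
    (hA : IsCycleSimplex r A) (hcl : initialPoints r A = ∅) {a b : ZMod n} (ha : a ∈ A)
    (hb : b ∈ A) : m ∣ (b - a).val := by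
  set e := (b - a).val with he
  -- From `c` to `b` there are `e % m + r` steps one way and `m - e % m + r` the other way.
  set c : ZMod n := a + (e / m : ℕ) * m - r
  have hc : c ∈ A := sub_mem_of_initialPoints_eq_empty hcl
    (add_mul_mem_of_initialPoints_eq_empty hn hcl ha _)
  have hbc : b - c = ((e % m + r : ℕ) : ZMod n) := by
    have hdiv : (e : ZMod n) = ((e / m * m + e % m : ℕ) : ZMod n) := by rw [Nat.div_add_mod']
    rw [he, ZMod.natCast_zmod_val, ← he] at hdiv
    push_cast at hdiv ⊢
    linear_combination hdiv
  have hlt : e % m < m := Nat.mod_lt _ hm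
  have hle := hA c hc b hb
  rw [hbc, natAbs_valMinAbs_natCast_le_iff (by omega)] at hle
  exact Nat.dvd_of_mod_eq_zero (by omega)

lemma IsCycleSimplex.dvd_of_initialPoints_eq_empty (hm : 0 < m) (hn : 2 * r + m = n)
    {A : Finset (ZMod n)} (hA : IsCycleSimplex r A) (hcl : initialPoints r A = ∅)
    (hne : A.Nonempty) : m ∣ r := by
  obtain ⟨a, ha⟩ := hne
  have h := hA.dvd_val_sub hm hn hcl (sub_mem_of_initialPoints_eq_empty hcl ha) ha
  rwa [sub_sub_cancel, ZMod.val_cast_of_lt (by omega)] at h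

/-- The residue class of `c` modulo `m` in the `n`-cycle, where `m ∣ n`. -/
def residueClass (h : m ∣ n) (c : ZMod m) : Finset (ZMod n) :=
  {x | ZMod.castHom h (ZMod m) x = c}

lemma mem_residueClass {h : m ∣ n} {c : ZMod m} {x : ZMod n} :
    x ∈ residueClass h c ↔ ZMod.castHom h (ZMod m) x = c :=
  Finset.mem_filter_univ x

lemma castHom_eq_castHom_iff_dvd_val_sub (h : m ∣ n) {a b : ZMod n} :
    ZMod.castHom h (ZMod m) b = ZMod.castHom h (ZMod m) a ↔ m ∣ (b - a).val := by
  rw [← sub_eq_zero, ← map_sub, ← ZMod.natCast_eq_zero_iff, ← map_natCast (ZMod.castHom h (ZMod m)),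
    ZMod.natCast_zmod_val]

lemma residueClass_nonempty (h : m ∣ n) (c : ZMod m) : (residueClass h c).Nonempty := by
  obtain ⟨x, hx⟩ := ZMod.castHom_surjective h c
  exact ⟨x, mem_residueClass.2 hx⟩

lemma residueClass_injective (h : m ∣ n) : Function.Injective (residueClass h) := by
  intro c c' hcc
  obtain ⟨x, hx⟩ := residueClass_nonempty h c
  exact (mem_residueClass.1 hx).symm.trans (mem_residueClass.1 (hcc ▸ hx))

lemma card_residueClass_mul (h : m ∣ n) (c : ZMod m) : (residueClass h c).card * m = n := by
  have : NeZero m := ⟨ne_zero_of_dvd_ne_zero (NeZero.ne n) h⟩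
  have hcard : ∀ c', (residueClass h c').card = (residueClass h c).card := fun c' =>
    AddMonoidHom.card_fiber_eq_of_mem_range (ZMod.castHom h (ZMod m)).toAddMonoidHom
      (ZMod.castHom_surjective h c') (ZMod.castHom_surjective h c)
  have hsum := Finset.card_eq_sum_card_fiberwise (s := Finset.univ) (t := Finset.univ)
    (f := ZMod.castHom h (ZMod m)) (fun _ _ => Finset.mem_univ _)
  calc (residueClass h c).card * m = ∑ c' : ZMod m, (residueClass h c').card := by
        simp [hcard, mul_comm]
    _ = n := hsum.symm.trans (Finset.card_univ.trans (ZMod.card n))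

lemma isCycleSimplex_residueClass (hm : m ∣ r) (hn : 2 * r + m = n) (h : m ∣ n) (c : ZMod m) :
    IsCycleSimplex r (residueClass h c) := by
  intro a ha b hb
  rw [mem_residueClass] at ha hb
  obtain ⟨j, hj⟩ := (castHom_eq_castHom_iff_dvd_val_sub h).1 (hb.trans ha.symm)
  obtain ⟨l, rfl⟩ := hm
  rw [← ZMod.natCast_zmod_val (b - a), natAbs_valMinAbs_natCast_le_iff (ZMod.val_lt _).le, hj]
  rcases le_or_gt j l with hjl | hjl
  · exact .inl (Nat.mul_le_mul_left m hjl)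
  · have := Nat.mul_le_mul_left m hjl
    rw [Nat.succ_eq_add_one, mul_add_one] at this
    omega

lemma initialPoints_residueClass (hm : m ∣ r) (h : m ∣ n) (c : ZMod m) :
    initialPoints r (residueClass h c) = ∅ := by
  refine Finset.filter_eq_empty_iff.2 fun a ha => not_not.2 ?_
  rw [mem_residueClass] at ha ⊢
  rw [map_sub, map_natCast, (ZMod.natCast_eq_zero_iff r m).2 hm, sub_zero, ha]

lemma IsCycleSimplex.eq_residueClass (hn : 2 * r + m = n) (h : m ∣ n)
    {A : Finset (ZMod n)} (hA : IsCycleSimplex r A) (hcl : initialPoints r A = ∅)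
    {a : ZMod n} (ha : a ∈ A) : A = residueClass h (ZMod.castHom h (ZMod m) a) := by
  ext b
  rw [mem_residueClass, castHom_eq_castHom_iff_dvd_val_sub]
  have hm : 0 < m := Nat.pos_of_dvd_of_pos h (NeZero.pos n)
  refine ⟨fun hb => hA.dvd_val_sub hm hn hcl ha hb, fun ⟨j, hj⟩ => ?_⟩
  have hb : b = a + j * m := by
    rw [← sub_eq_iff_eq_add', ← ZMod.natCast_zmod_val (b - a), hj, Nat.cast_mul, mul_comm]
  exact hb ▸ add_mul_mem_of_initialPoints_eq_empty hn hcl ha j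

lemma filter_initialPoints_eq_empty_eq_image_residueClass [NeZero m] (hm : m ∣ r)
    (hn : 2 * r + m = n) (h : m ∣ n) :
    ({A | A.Nonempty ∧ IsCycleSimplex r A ∧ initialPoints r A = ∅} : Finset (Finset (ZMod n))) =
      Finset.univ.image (residueClass h) := by
  ext A
  simp only [Finset.mem_filter_univ, Finset.mem_image, Finset.mem_univ, true_and]
  constructor
  · rintro ⟨⟨a, ha⟩, hA, hcl⟩
    exact ⟨_, (hA.eq_residueClass hn h hcl ha).symm⟩
  · rintro ⟨c, rfl⟩
    exact ⟨residueClass_nonempty h c, isCycleSimplex_residueClass hm hn h c,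
      initialPoints_residueClass hm h c⟩

theorem sum_isCycleSimplex_neg_one_pow_card (hm : 0 < m) (hn : 2 * r + m = n) :
    ∑ A : Finset (ZMod n) with A.Nonempty ∧ IsCycleSimplex r A, (-1 : ℤ) ^ (A.card + 1) =
      if m ∣ r then (m : ℤ) else 0 := by
  have : NeZero m := ⟨hm.ne'⟩
  rw [sum_isCycleSimplex_eq_sum_initialPoints_eq_empty (by omega)]
  split_ifs with hmr
  · have hmn : m ∣ n := hn ▸ (hmr.mul_left 2).add dvd_rfl
    rw [filter_initialPoints_eq_empty_eq_image_residueClass hmr hn hmn,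
      Finset.sum_image (residueClass_injective hmn).injOn]
    have hodd : ∀ c, Odd (residueClass hmn c).card := by
      intro c
      obtain ⟨l, rfl⟩ := hmr
      refine ⟨l, Nat.eq_of_mul_eq_mul_right hm ?_⟩
      rw [card_residueClass_mul, ← hn]
      ring
    simp [(hodd _).add_one.neg_one_pow, ZMod.card]
  · refine Finset.sum_eq_zero fun A hA => ?_
    obtain ⟨hne, hsimplex, hcl⟩ := (Finset.mem_filter.1 hA).2
    exact absurd (hsimplex.dvd_of_initialPoints_eq_empty hm hn hcl hne) hmr

end Cycle

lemma two_mul_div_mul_div_two_add_div {n d : ℕ} (hd : d ∣ n) (hodd : Odd d) :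
    2 * (n / d * (d / 2)) + n / d = n :=
  calc 2 * (n / d * (d / 2)) + n / d = n / d * (2 * (d / 2) + 1) := by ring
    _ = n := by rw [Nat.two_mul_div_two_add_one_of_odd hodd, Nat.div_mul_cancel hd]

lemma injOn_div_mul_div_two (n : ℕ) :
    Set.InjOn (fun d => n / d * (d / 2)) (n.divisors.filter Odd) := by
  intro d hd e he hde
  rw [Finset.mem_coe, Finset.mem_filter, Nat.mem_divisors] at hd he
  have hdn := two_mul_div_mul_div_two_add_div hd.1.1 hd.2
  have hen := two_mul_div_mul_div_two_add_div he.1.1 he.2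
  have hmul : n / d * (d / 2) = n / e * (e / 2) := hde
  exact (Nat.div_eq_iff_eq_of_dvd_dvd hd.1.2 hd.1.1 he.1.1).1 (by omega)

section GeoCycle

variable {n : ℕ} [NeZero n]

variable (n) in
/-- The homomorphism from `ZMod n` to the circle of length `2π` whose image is `geoCycle n`. -/
noncomputable def cycleHom : ZMod n →+ AddCircle (2 * π : ℝ) :=
  (AddCircle.equivAddCircle 1 (2 * π) one_ne_zero Real.two_pi_pos.ne').toAddMonoidHom.comp
    ZMod.toAddCircle

lemma cycleHom_natCast (k : ℕ) :
    cycleHom n k = ((2 * π * k / n : ℝ) : AddCircle (2 * π : ℝ)) := by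
  have h := AddCircle.equivAddCircle_apply_mk 1 (2 * π) one_ne_zero Real.two_pi_pos.ne' (k / n)
  rw [inv_one, one_mul] at h
  rw [cycleHom, AddMonoidHom.comp_apply, ZMod.toAddCircle_natCast]
  refine h.trans ?_
  congr 1
  ring

variable (n) in
lemma cycleHom_injective : Function.Injective (cycleHom n) :=
  (AddCircle.equivAddCircle 1 (2 * π) one_ne_zero Real.two_pi_pos.ne').injective.comp
    (ZMod.toAddCircle_injective n)

lemma dist_cycleHom (x y : ZMod n) :
    dist (cycleHom n x) (cycleHom n y) = 2 * π / n * (x - y).valMinAbs.natAbs := by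
  have : Fact (0 < 2 * π) := ⟨Real.two_pi_pos⟩
  have h := AddCircle.norm_div_natCast (p := 2 * π) (m := (x - y).val) (n := n)
  rw [Nat.mod_eq_of_lt (ZMod.val_lt _), ← ZMod.valMinAbs_natAbs_eq_min] at h
  rw [dist_eq_norm, ← map_sub, ← ZMod.natCast_zmod_val (x - y), cycleHom_natCast,
    ZMod.natCast_zmod_val, div_mul_eq_mul_div, mul_div_assoc (2 * π) (Nat.cast (Int.natAbs _)), ← h]
  congr 2
  ring

open scoped Classical in
variable (n) in
lemma geoCycle_eq_image : geoCycle n = Finset.univ.image (cycleHom n) := by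
  ext y
  -- In `geoCycle`, `Finset.range n` is coerced to `Finset ℝ` through the monad structure.
  simp only [geoCycle, Finset.bind_def, Finset.pure_def, Finset.sup_eq_biUnion, Finset.mem_image,
    Finset.mem_biUnion, Finset.mem_singleton, Finset.mem_range, Finset.mem_univ, true_and]
  constructor
  · rintro ⟨_, ⟨k, -, rfl⟩, rfl⟩
    exact ⟨k, cycleHom_natCast k⟩
  · rintro ⟨x, rfl⟩
    exact ⟨x.val, ⟨x.val, ZMod.val_lt x, rfl⟩, by rw [← cycleHom_natCast, ZMod.natCast_zmod_val]⟩

variable (n) in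
lemma geoCycle_nonempty : (geoCycle n).Nonempty := by
  classical
  rw [geoCycle_eq_image]
  exact Finset.univ_nonempty.image _

lemma exists_diam_eq_of_subset_geoCycle {B : Finset (AddCircle (2 * π : ℝ))}
    (hB : B ⊆ geoCycle n) (hne : B.Nonempty) :
    ∃ k ≤ n / 2, Metric.diam (B : Set (AddCircle (2 * π : ℝ))) = 2 * π / n * k := by
  classical
  obtain ⟨x, hx, y, hy, hxy⟩ := exists_diam_eq_dist hne
  rw [geoCycle_eq_image] at hB
  obtain ⟨a, -, rfl⟩ := Finset.mem_image.1 (hB hx)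
  obtain ⟨b, -, rfl⟩ := Finset.mem_image.1 (hB hy)
  exact ⟨_, ZMod.natAbs_valMinAbs_le _, hxy.trans (dist_cycleHom a b)⟩

lemma diam_cycleHom_image_le_iff {r : ℕ} {A : Finset (ZMod n)} :
    Metric.diam (cycleHom n '' A) ≤ 2 * π / n * r ↔ IsCycleSimplex r A := by
  have hpos : 0 < 2 * π / n := div_pos Real.two_pi_pos (Nat.cast_pos.2 (NeZero.pos n))
  have hdist : ∀ a b : ZMod n, dist (cycleHom n b) (cycleHom n a) ≤ 2 * π / n * r ↔
      (b - a).valMinAbs.natAbs ≤ r := fun a b => by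
    rw [dist_cycleHom, mul_le_mul_iff_right₀ hpos, Nat.cast_le]
  constructor
  · intro h a ha b hb
    exact (hdist a b).1 <| (Metric.dist_le_diam_of_mem (A.finite_toSet.image _).isBounded
      (Set.mem_image_of_mem _ hb) (Set.mem_image_of_mem _ ha)).trans h
  · intro h
    refine Metric.diam_le_of_forall_dist_le (by positivity) ?_
    rintro _ ⟨b, hb, rfl⟩ _ ⟨a, ha, rfl⟩
    exact (hdist a b).2 (h a ha b hb)

lemma ripsEuler_geoCycle_eq_sum (r : ℕ) :
    ripsEuler (geoCycle n) (2 * π / n * r) =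
      ∑ A : Finset (ZMod n) with A.Nonempty ∧ IsCycleSimplex r A, (-1 : ℤ) ^ (A.card + 1) := by
  classical
  rw [ripsEuler, geoCycle_eq_image, Finset.powerset_image, Finset.filter_image,
    Finset.sum_image (Finset.image_injective (cycleHom_injective n)).injOn, Finset.powerset_univ]
  simp only [Finset.image_nonempty, Finset.coe_image, diam_cycleHom_image_le_iff,
    Finset.card_image_of_injective _ (cycleHom_injective n)]

theorem ripsEuler_geoCycle {r m : ℕ} (hm : 0 < m) (hn : 2 * r + m = n) :
    ripsEuler (geoCycle n) (2 * π / n * r) = if m ∣ r then (m : ℤ) else 0 := by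
  rw [ripsEuler_geoCycle_eq_sum, sum_isCycleSimplex_neg_one_pow_card hm hn]

lemma ripsEuler_geoCycle_nonneg {r : ℕ} (hr : 2 * r < n) :
    0 ≤ ripsEuler (geoCycle n) (2 * π / n * r) := by
  rw [ripsEuler_geoCycle (Nat.sub_pos_of_lt hr) (Nat.add_sub_of_le hr.le)]
  positivity

variable (n) in
lemma sum_odd_divisors_le_sum_ripsEuler_geoCycle :
    ∑ d ∈ n.divisors with Odd d, ((n / d : ℕ) : ℤ) ≤
      ∑ r ∈ Finset.range ((n + 1) / 2), ripsEuler (geoCycle n) (2 * π / n * r) := by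
  have hquot : ∀ d ∈ n.divisors.filter Odd, 2 * (n / d * (d / 2)) + n / d = n := fun d hd =>
    two_mul_div_mul_div_two_add_div (Nat.dvd_of_mem_divisors (Finset.mem_filter.1 hd).1)
      (Finset.mem_filter.1 hd).2
  have hpos : ∀ d ∈ n.divisors.filter Odd, 0 < n / d := fun d hd =>
    Nat.div_pos (Nat.divisor_le (Finset.mem_filter.1 hd).1)
      (Nat.pos_of_mem_divisors (Finset.mem_filter.1 hd).1)
  calc ∑ d ∈ n.divisors with Odd d, ((n / d : ℕ) : ℤ)
      = ∑ d ∈ n.divisors with Odd d,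
          ripsEuler (geoCycle n) (2 * π / n * (n / d * (d / 2) : ℕ)) := by
        refine Finset.sum_congr rfl fun d hd => ?_
        rw [ripsEuler_geoCycle (hpos d hd) (hquot d hd), if_pos (dvd_mul_right _ _)]
    _ = ∑ r ∈ (n.divisors.filter Odd).image fun d => n / d * (d / 2),
          ripsEuler (geoCycle n) (2 * π / n * r) := by
        rw [Finset.sum_image (injOn_div_mul_div_two n)]
    _ ≤ ∑ r ∈ Finset.range ((n + 1) / 2), ripsEuler (geoCycle n) (2 * π / n * r) := by
        refine Finset.sum_le_sum_of_subset_of_nonneg ?_ fun r hr _ => ?_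
        · refine Finset.image_subset_iff.2 fun d hd => Finset.mem_range.2 ?_
          have := hquot d hd
          have := hpos d hd
          omega
        · rw [Finset.mem_range] at hr
          exact ripsEuler_geoCycle_nonneg (by omega)

variable (n) in
lemma ripsMag_geoCycle_eq_sum_ripsEuler (t : ℝ) :
    ripsMag (geoCycle n) t =
      (∑ r ∈ Finset.range ((n + 1) / 2), ripsEuler (geoCycle n) (2 * π / n * r) *
        (Real.exp (-(2 * π / n * r) * t) - Real.exp (-(2 * π / n * (r + 1 : ℕ)) * t))) +
      Real.exp (-(2 * π / n * ((n + 1) / 2 : ℕ)) * t) := by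
  have hpos : 0 < 2 * π / n := div_pos Real.two_pi_pos (Nat.cast_pos.2 (NeZero.pos n))
  refine ripsMag_eq_sum_ripsEuler (s := fun k => 2 * π / n * k) (geoCycle_nonempty n)
    (Nat.strictMono_cast.const_mul hpos) (fun B hB hne => ?_) t
  obtain ⟨k, hk, hdiam⟩ := exists_diam_eq_of_subset_geoCycle hB hne
  exact ⟨k, by omega, hdiam⟩

lemma mul_exp_neg_le_exp_sub_exp {r : ℕ} (hr : r < n) {t : ℝ} (ht : 0 ≤ t) :
    2 * π * t / n * Real.exp (-(2 * π * t)) ≤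
      Real.exp (-(2 * π / n * r) * t) - Real.exp (-(2 * π / n * (r + 1 : ℕ)) * t) := by
  have hn : (0 : ℝ) < n := Nat.cast_pos.2 (NeZero.pos n)
  have hstep : 2 * π / n * (r + 1 : ℕ) * t - 2 * π / n * r * t = 2 * π * t / n := by
    push_cast
    ring
  have htop : 2 * π / n * (r + 1 : ℕ) * t ≤ 2 * π * t := by
    have hle : ((r + 1 : ℕ) : ℝ) ≤ n := Nat.cast_le.2 hr
    calc 2 * π / n * (r + 1 : ℕ) * t ≤ 2 * π / n * n * t := by gcongr
      _ = 2 * π * t := by rw [div_mul_cancel₀ _ hn.ne']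
  calc 2 * π * t / n * Real.exp (-(2 * π * t))
      ≤ 2 * π * t / n * Real.exp (-(2 * π / n * (r + 1 : ℕ) * t)) := by gcongr
    _ ≤ Real.exp (-(2 * π / n * r * t)) - Real.exp (-(2 * π / n * (r + 1 : ℕ) * t)) := by
        rw [← hstep]
        exact sub_mul_exp_neg_le _ _
    _ = _ := by rw [neg_mul, neg_mul]

variable (n) in
theorem sum_inv_odd_divisors_le_ripsMag_geoCycle {t : ℝ} (ht : 0 ≤ t) :
    2 * π * t * Real.exp (-(2 * π * t)) * ∑ d ∈ n.divisors with Odd d, (d : ℝ)⁻¹ ≤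
      ripsMag (geoCycle n) t := by
  have hn : (n : ℝ) ≠ 0 := Nat.cast_ne_zero.2 (NeZero.ne n)
  set c := 2 * π * t / n * Real.exp (-(2 * π * t))
  have hc : 0 ≤ c := by positivity
  have hinv : ∀ d ∈ n.divisors.filter Odd, n * (d : ℝ)⁻¹ = ((n / d : ℕ) : ℤ) := fun d hd => by
    have hd := (Finset.mem_filter.1 hd).1
    rw [Int.cast_natCast, Nat.cast_div (Nat.dvd_of_mem_divisors hd)
      (Nat.cast_ne_zero.2 (Nat.pos_of_mem_divisors hd).ne'), div_eq_mul_inv]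
  calc 2 * π * t * Real.exp (-(2 * π * t)) * ∑ d ∈ n.divisors with Odd d, (d : ℝ)⁻¹
      = c * ∑ d ∈ n.divisors with Odd d, n * (d : ℝ)⁻¹ := by
        rw [← Finset.mul_sum]
        simp only [c]
        field_simp
    _ = (∑ d ∈ n.divisors with Odd d, ((n / d : ℕ) : ℤ) : ℤ) * c := by
        rw [mul_comm, Int.cast_sum, Finset.sum_congr rfl hinv]
    _ ≤ (∑ r ∈ Finset.range ((n + 1) / 2), ripsEuler (geoCycle n) (2 * π / n * r) : ℤ) * c :=
        mul_le_mul_of_nonneg_right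
          (Int.cast_le.2 (sum_odd_divisors_le_sum_ripsEuler_geoCycle n)) hc
    _ ≤ ∑ r ∈ Finset.range ((n + 1) / 2), ripsEuler (geoCycle n) (2 * π / n * r) *
          (Real.exp (-(2 * π / n * r) * t) - Real.exp (-(2 * π / n * (r + 1 : ℕ)) * t)) := by
        rw [Int.cast_sum, Finset.sum_mul]
        refine Finset.sum_le_sum fun r hr => ?_
        rw [Finset.mem_range] at hr
        exact mul_le_mul_of_nonneg_left (mul_exp_neg_le_exp_sub_exp (by omega) ht)
          (Int.cast_nonneg (ripsEuler_geoCycle_nonneg (by omega)))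
    _ ≤ ripsMag (geoCycle n) t := by
        rw [ripsMag_geoCycle_eq_sum_ripsEuler]
        exact le_add_of_nonneg_right (Real.exp_pos _).le

end GeoCycle

lemma tendsto_sum_range_odd_inv :
    Filter.Tendsto (fun K => ∑ d ∈ Finset.range K with Odd d, (d : ℝ)⁻¹)
      Filter.atTop Filter.atTop := by
  have h := Real.not_summable_indicator_one_div_natCast two_ne_zero 1
  rw [not_summable_iff_tendsto_nat_atTop_of_nonneg
    fun _ => Set.indicator_nonneg (fun _ _ => by positivity) _] at h
  refine h.congr fun K => ?_
  rw [Finset.sum_filter]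
  refine Finset.sum_congr rfl fun d _ => ?_
  simp [Set.indicator_apply, ZMod.natCast_eq_one_iff_odd]

lemma filter_odd_range_subset_divisors_factorial (K : ℕ) :
    (Finset.range K).filter Odd ⊆ K.factorial.divisors.filter Odd := by
  intro d hd
  rw [Finset.mem_filter, Finset.mem_range] at hd
  rw [Finset.mem_filter, Nat.mem_divisors]
  exact ⟨⟨Nat.dvd_factorial hd.2.pos hd.1.le, K.factorial_ne_zero⟩, hd.2⟩

/-- for every `t > 0`, the sequence `n ↦ |tC_n^geo|_Rips` is unbounded
above (equivalently, its limsup is `+∞`). -/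
theorem ripsMag_geoCycle_unbounded (t : ℝ) (ht : 0 < t) :
    ¬ BddAbove (Set.range fun n : ℕ => ripsMag (geoCycle n) t) := by
  have hc : 0 < 2 * π * t * Real.exp (-(2 * π * t)) := by positivity
  have htop : Filter.Tendsto (fun K : ℕ => ripsMag (geoCycle K.factorial) t)
      Filter.atTop Filter.atTop := by
    refine Filter.tendsto_atTop_mono (fun K => ?_) (tendsto_sum_range_odd_inv.const_mul_atTop hc)
    have : NeZero K.factorial := ⟨K.factorial_ne_zero⟩
    refine le_trans ?_ (sum_inv_odd_divisors_le_ripsMag_geoCycle K.factorial ht.le)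
    exact mul_le_mul_of_nonneg_left (Finset.sum_le_sum_of_subset_of_nonneg
      (filter_odd_range_subset_divisors_factorial K) fun d _ _ => by positivity) hc.le
  exact fun hbdd => Filter.not_bddAbove_of_tendsto_atTop htop <|
    hbdd.mono (Set.range_comp_subset_range Nat.factorial fun n => ripsMag (geoCycle n) t)
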